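/- Let S be a Polish metric space and let P be an asymptotically stable regular Markov operator on S with invariant probability measure μ*. Suppose P has the e-property in C_b(S) at some point z in the support of μ*. Then for every bounded continuous f : S → ℝ and every ε > 0 there exist a Borel set B ⊆ S with μ*(B) > 0 and N ∈ ℕ such that |Uⁿf(x) − ∫ f dμ*| ≤ ε for all n ≥ N and all x ∈ B. -/

import Mathlib

open MeasureTheory ProbabilityTheory Filter Topology

/-- The `n`-step evolution of a measure under the Markov operator generated by the
transition kernel `κ`: `P⁰μ = μ`, `Pⁿ⁺¹μ = (Pⁿμ).bind κ`. -/
noncomputable def kIter {S : Type*} [MeasurableSpace S] (κ : ProbabilityTheory.Kernel S S) :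
    ℕ → Measure S → Measure S
  | 0, μ => μ
  | n + 1, μ => (kIter κ n μ).bind (fun x => κ x)

/-- The `n`-th iterate of the dual operator: `Uⁿf(x) = ∫ f d(Pⁿδₓ)`. -/
noncomputable def kDual {S : Type*} [MeasurableSpace S] (κ : ProbabilityTheory.Kernel S S)
    (n : ℕ) (f : S → ℝ) (x : S) : ℝ :=
  ∫ y, f y ∂(kIter κ n (Measure.dirac x))

/-- A real-valued function is bounded. -/
def IsBddFun {S : Type*} (f : S → ℝ) : Prop := ∃ C : ℝ, ∀ x, |f x| ≤ C

/-- The Feller property: the dual operator maps bounded continuous functions to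
continuous functions. -/
def IsFeller {S : Type*} [MeasurableSpace S] [TopologicalSpace S]
    (κ : ProbabilityTheory.Kernel S S) : Prop :=
  ∀ f : S → ℝ, Continuous f → IsBddFun f → Continuous (fun x => ∫ y, f y ∂(κ x))

/-- Asymptotic stability: `μst` is an invariant probability measure and `Pⁿμ → μst`
weakly for every Borel probability measure `μ`. -/
def IsAsympStable {S : Type*} [MeasurableSpace S] [TopologicalSpace S]
    (κ : ProbabilityTheory.Kernel S S) (μst : Measure S) : Prop :=
  IsProbabilityMeasure μst ∧ kIter κ 1 μst = μst ∧
    ∀ μ : Measure S, IsProbabilityMeasure μ → ∀ f : S → ℝ, Continuous f → IsBddFun f →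
      Tendsto (fun n => ∫ x, f x ∂(kIter κ n μ)) atTop (𝓝 (∫ x, f x ∂μst))

/-- The e-property in `C_b(S)` at a point `z`: for every bounded continuous `f`,
`sup_{n} |Uⁿf(x) − Uⁿf(z)| → 0` as `x → z`. -/
def EPropCbAt {S : Type*} [MeasurableSpace S] [TopologicalSpace S]
    (κ : ProbabilityTheory.Kernel S S) (z : S) : Prop :=
  ∀ f : S → ℝ, Continuous f → IsBddFun f →
    Tendsto (fun x => ⨆ n : ℕ, |kDual κ n f x - kDual κ n f z|) (𝓝 z) (𝓝 0)

/-! The e-property at `z` says that, for each bounded continuous `f`, the functions `Uⁿf` are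
equicontinuous at `z`; the supremum defining it is never the junk value of an unbounded one, because
`|Uⁿf| ≤ sup |f|`. Since `Uⁿf(z) → ∫ f dμst`, equicontinuity yields the joint convergence
`Uⁿf(x) → ∫ f dμst` as `n → ∞` and `x → z`, so a small open neighbourhood of `z` can serve as `B`;
it is charged by `μst` because `z` lies in the support. -/

section Equicontinuity

open scoped Uniformity

variable {ι X α : Type*} [TopologicalSpace X] {F : ι → X → α} {z : X}

theorem tendsto_prod_nhds_of_equicontinuousAt [UniformSpace α] (hF : EquicontinuousAt F z)
    {l : Filter ι} {c : α} (hlim : Tendsto (F · z) l (𝓝 c)) :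
    Tendsto (fun p : ι × X => F p.1 p.2) (l ×ˢ 𝓝 z) (𝓝 c) := by
  have hcenter : Tendsto (fun p : ι × X => (c, F p.1 z)) (l ×ˢ 𝓝 z) (𝓤 α) :=
    (Uniform.tendsto_nhds_right.mp hlim).comp tendsto_fst
  have hequi : Tendsto (fun p : ι × X => (F p.1 z, F p.1 p.2)) (l ×ˢ 𝓝 z) (𝓤 α) :=
    fun V hV => ((hF V hV).prod_inr l).mono fun p hp => hp p.1
  exact Uniform.tendsto_nhds_right.mpr (hcenter.uniformity_trans hequi)

theorem equicontinuousAt_of_tendsto_iSup_dist [PseudoMetricSpace α]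
    (hbdd : ∀ᶠ x in 𝓝 z, BddAbove (Set.range fun i => dist (F i x) (F i z)))
    (hsup : Tendsto (fun x => ⨆ i, dist (F i x) (F i z)) (𝓝 z) (𝓝 0)) :
    EquicontinuousAt F z := by
  refine Metric.equicontinuousAt_of_continuity_modulus _ hsup F (hbdd.mono fun x hx i => ?_)
  rw [dist_comm]
  exact le_ciSup hx i

end Equicontinuity

section MarkovKernel

variable {S : Type*} [MeasurableSpace S] {κ : Kernel S S} [IsMarkovKernel κ]

theorem isProbabilityMeasure_kIter (n : ℕ) (μ : Measure S) [IsProbabilityMeasure μ] :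
    IsProbabilityMeasure (kIter κ n μ) := by
  induction n with
  | zero => assumption
  | succ n ih =>
    exact isProbabilityMeasure_bind κ.measurable.aemeasurable (.of_forall fun _ => inferInstance)

theorem abs_kDual_le {f : S → ℝ} {C : ℝ} (hC : ∀ x, |f x| ≤ C) (n : ℕ) (x : S) :
    |kDual κ n f x| ≤ C := by
  have := isProbabilityMeasure_kIter (κ := κ) n (Measure.dirac x)
  calc ‖∫ y, f y ∂kIter κ n (Measure.dirac x)‖
    _ ≤ C * (kIter κ n (Measure.dirac x)).real Set.univ :=
      norm_integral_le_of_norm_le_const (.of_forall hC)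
    _ = C := by rw [probReal_univ, mul_one]

theorem bddAbove_range_dist_kDual {f : S → ℝ} (hb : IsBddFun f) (x y : S) :
    BddAbove (Set.range fun n => dist (kDual κ n f x) (kDual κ n f y)) := by
  obtain ⟨C, hC⟩ := hb
  refine ⟨C + C, Set.forall_mem_range.mpr fun n => ?_⟩
  exact (abs_sub _ _).trans (add_le_add (abs_kDual_le hC n x) (abs_kDual_le hC n y))

variable [TopologicalSpace S] {z : S}

theorem EPropCbAt.equicontinuousAt_kDual (hE : EPropCbAt κ z) {f : S → ℝ} (hf : Continuous f)
    (hb : IsBddFun f) : EquicontinuousAt (fun n => kDual κ n f) z :=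
  equicontinuousAt_of_tendsto_iSup_dist (.of_forall fun x => bddAbove_range_dist_kDual hb x z)
    (hE f hf hb)

theorem lowerBound_set_of_eProp_at_support_point_general [OpensMeasurableSpace S] {μst : Measure S}
    (hconv : ∀ f : S → ℝ, Continuous f → IsBddFun f →
      Tendsto (fun n => kDual κ n f z) atTop (𝓝 (∫ y, f y ∂μst)))
    (hz : z ∈ μst.support) (hE : EPropCbAt κ z) (f : S → ℝ) (hf : Continuous f) (hb : IsBddFun f)
    (ε : ℝ) (hε : 0 < ε) :
    ∃ B : Set S, MeasurableSet B ∧ 0 < μst B ∧ ∃ N : ℕ, ∀ n ≥ N, ∀ x ∈ B,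
      |kDual κ n f x - ∫ y, f y ∂μst| ≤ ε := by
  have hjoint : Tendsto (fun p : ℕ × S => kDual κ p.1 f p.2) (atTop ×ˢ 𝓝 z)
      (𝓝 (∫ y, f y ∂μst)) :=
    tendsto_prod_nhds_of_equicontinuousAt (hE.equicontinuousAt_kDual hf hb) (hconv f hf hb)
  obtain ⟨⟨N, B⟩, ⟨-, hzB, hB⟩, hclose⟩ := (atTop_basis.prod (nhds_basis_opens z)).eventually_iff.mp
    (Metric.tendsto_nhds.mp hjoint ε hε)
  have hpos : 0 < μst B := (Measure.mem_support_iff_forall z).mp hz B (hB.mem_nhds hzB)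
  exact ⟨B, hB.measurableSet, hpos, N, fun n hn x hx => (hclose (x := (n, x)) ⟨hn, hx⟩).le⟩

end MarkovKernel

/-- If an asymptotically stable regular Markov operator has the e-property in `C_b(S)` at a
point of the support of its invariant measure `μst`, then for every bounded continuous `f`
and `ε > 0` there are a Borel set `B` of positive `μst`-measure and `N ∈ ℕ` with
`|Uⁿf(x) − ∫ f dμst| ≤ ε` for all `n ≥ N` and `x ∈ B`. -/
theorem lowerBound_set_of_eProp_at_support_point
    {S : Type*} [MetricSpace S] [CompleteSpace S] [SecondCountableTopology S]
    [MeasurableSpace S] [BorelSpace S]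
    (κ : ProbabilityTheory.Kernel S S) [IsMarkovKernel κ]
    (μst : Measure S) (hstab : IsAsympStable κ μst)
    (z : S) (hz : ∀ ε > 0, 0 < μst (Metric.ball z ε)) (hEz : EPropCbAt κ z) :
    ∀ f : S → ℝ, Continuous f → IsBddFun f → ∀ ε > (0 : ℝ),
      ∃ B : Set S, MeasurableSet B ∧ 0 < μst B ∧ ∃ N : ℕ, ∀ n ≥ N, ∀ x ∈ B,
        |kDual κ n f x - ∫ y, f y ∂μst| ≤ ε := by
  exact lowerBound_set_of_eProp_at_support_point_general
    (hstab.2.2 (Measure.dirac z) inferInstance) (Metric.nhds_basis_ball.mem_measureSupport.mpr hz)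
    hEz
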